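/- arXiv:2601.13058 — 2 statements merged into one kernel-verified Lean document; each statement's English description precedes it below -/
import Mathlib

section
/- For every integer n ≥ 1, the map g_n is a bijection of the Cantor space ℕ → Bool. -/
/-- Concatenation of a finite binary word `u` with an infinite sequence `x`
in the Cantor space `ℕ → Bool`. -/
def cat (u : List Bool) (x : ℕ → Bool) : ℕ → Bool :=
  fun i => u.getD i (x (i - u.length))

/-- `g` satisfies the defining rules of the map `g_n`:
`g_n(1^k 0 w) = 0^k 1 w` for `0 ≤ k < n-1`, and `g_n(1^{n-1} w) = 0^{n-1} w`. -/
def GnRules (n : ℕ) (g : (ℕ → Bool) → ℕ → Bool) : Prop :=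
  (∀ k, k < n - 1 → ∀ w : ℕ → Bool,
      g (cat (List.replicate k true ++ [false]) w)
        = cat (List.replicate k false ++ [true]) w) ∧
  (∀ w : ℕ → Bool,
      g (cat (List.replicate (n - 1) true) w) = cat (List.replicate (n - 1) false) w)

/-!
The words `1^k 0` with `k < n - 1` together with `1^(n-1)` cut the Cantor space into disjoint
cones, and so do the same words with `0` and `1` exchanged. The map `g_n` replaces each word of the
first family by its counterpart in the second and leaves the tail alone, so it carries the pieces of
one partition bijectively onto the pieces of the other.
-/

open Function Set

section Cat

variable {u : List Bool} {x : ℕ → Bool}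

lemma cat_apply_of_lt {i : ℕ} (hi : i < u.length) : cat u x i = u[i] :=
  List.getD_eq_getElem u _ hi

lemma cat_apply_add_length (u : List Bool) (x : ℕ → Bool) (i : ℕ) :
    cat u x (i + u.length) = x i := by
  rw [cat, List.getD_eq_default u _ (Nat.le_add_left _ _), Nat.add_sub_cancel]

lemma cat_injective (u : List Bool) : Injective (cat u) := fun x y h ↦ funext fun i ↦ by
  rw [← cat_apply_add_length u x, h, cat_apply_add_length]

lemma mem_range_cat : x ∈ range (cat u) ↔ ∀ i (hi : i < u.length), x i = u[i] := by
  constructor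
  · rintro ⟨w, rfl⟩ i hi
    exact cat_apply_of_lt hi
  · refine fun h ↦ ⟨fun i ↦ x (i + u.length), funext fun i ↦ ?_⟩
    rcases lt_or_ge i u.length with hi | hi
    · rw [cat_apply_of_lt hi, h i hi]
    · obtain ⟨j, rfl⟩ := Nat.exists_eq_add_of_le' hi
      exact cat_apply_add_length u _ j

end Cat

/-- A family of words is a complete prefix code if every infinite sequence begins with exactly one
of its members. Uniqueness is of the index, so the words are in particular pairwise distinct. -/
def IsCompletePrefixCode {ι : Type*} (u : ι → List Bool) : Prop :=
  ∀ x : ℕ → Bool, ∃! i, x ∈ range (cat (u i))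

namespace IsCompletePrefixCode

variable {ι : Type*} {u v : ι → List Bool}

lemma bijective_cat (hu : IsCompletePrefixCode u) :
    Bijective fun p : ι × (ℕ → Bool) ↦ cat (u p.1) p.2 := by
  constructor
  · rintro ⟨i, x⟩ ⟨j, y⟩ (h : cat (u i) x = cat (u j) y)
    obtain rfl : i = j := (hu (cat (u i) x)).unique ⟨x, rfl⟩ ⟨y, h.symm⟩
    rw [cat_injective (u i) h]
  · intro x
    obtain ⟨i, w, hw⟩ := (hu x).exists
    exact ⟨(i, w), hw⟩

lemma bijective_of_replace_prefix (hu : IsCompletePrefixCode u) (hv : IsCompletePrefixCode v)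
    {g : (ℕ → Bool) → ℕ → Bool} (hg : ∀ i w, g (cat (u i) w) = cat (v i) w) : Bijective g := by
  rw [← Bijective.of_comp_iff g hu.bijective_cat]
  convert hv.bijective_cat using 1
  exact funext fun p ↦ hg p.1 p.2

end IsCompletePrefixCode

/-- The truncated unary code with digit `b`: the words `b^k (!b)` for `k < m`, indexed by `some k`,
and the word `b^m`, indexed by `none`. -/
def truncatedUnary (b : Bool) (m : ℕ) : Option (Fin m) → List Bool
  | some k => List.replicate k b ++ [!b]
  | none => List.replicate m b

section TruncatedUnary

variable {b : Bool} {m : ℕ} {x : ℕ → Bool}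

lemma mem_range_cat_truncatedUnary_none :
    x ∈ range (cat (truncatedUnary b m none)) ↔ ∀ i < m, x i = b := by
  rw [mem_range_cat]
  simp [truncatedUnary]

lemma mem_range_cat_truncatedUnary_some {k : Fin m} :
    x ∈ range (cat (truncatedUnary b m (some k))) ↔ (∀ i < (k : ℕ), x i = b) ∧ x k ≠ b := by
  have hlen : (truncatedUnary b m (some k)).length = k + 1 := by simp [truncatedUnary]
  rw [mem_range_cat, ← Bool.eq_not]
  constructor
  · refine fun h ↦ ⟨fun i hi ↦ ?_, ?_⟩
    · simpa [truncatedUnary, hi] using h i (by omega)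
    · simpa [truncatedUnary] using h k (by omega)
  · rintro ⟨hlt, hk⟩ i hi
    obtain hik | rfl : i < k ∨ i = k := by omega
    · simp [truncatedUnary, hik, hlt]
    · simpa [truncatedUnary] using hk

lemma isCompletePrefixCode_truncatedUnary (b : Bool) (m : ℕ) :
    IsCompletePrefixCode (truncatedUnary b m) := by
  intro x
  by_cases h : ∃ k < m, x k ≠ b
  · obtain ⟨hk, hxk⟩ := Nat.find_spec h
    have hlt : ∀ i < Nat.find h, x i = b := fun i hi ↦
      not_not.1 fun hxi ↦ Nat.find_min h hi ⟨hi.trans hk, hxi⟩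
    refine ⟨some ⟨Nat.find h, hk⟩, mem_range_cat_truncatedUnary_some.2 ⟨hlt, hxk⟩, ?_⟩
    rintro (_ | l) hl
    · exact absurd (mem_range_cat_truncatedUnary_none.1 hl _ hk) hxk
    · obtain ⟨hxlt, hxl⟩ := mem_range_cat_truncatedUnary_some.1 hl
      have hfind : Nat.find h = l :=
        (Nat.find_eq_iff h).2 ⟨⟨l.2, hxl⟩, fun i hi hxi ↦ hxi.2 (hxlt i hi)⟩
      exact congrArg some (Fin.ext hfind.symm)
  · push Not at h
    refine ⟨none, mem_range_cat_truncatedUnary_none.2 h, ?_⟩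
    rintro (_ | l) hl
    · rfl
    · exact absurd (h l l.2) (mem_range_cat_truncatedUnary_some.1 hl).2

end TruncatedUnary

/-- For every `n ≥ 1`, the map `g_n` is a bijection of the Cantor space `ℕ → Bool`. -/
theorem gn_bijective (n : ℕ) (hn : 1 ≤ n)
    (g : (ℕ → Bool) → ℕ → Bool) (hg : GnRules n g) :
    Function.Bijective g := by
  refine (isCompletePrefixCode_truncatedUnary true (n - 1)).bijective_of_replace_prefix
    (isCompletePrefixCode_truncatedUnary false (n - 1)) ?_
  rintro (_ | k) w
  · exact hg.2 w
  · exact hg.1 k k.2 w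
end

section
/- For every integer n ≥ 1, the order of g_n as an element of the permutation group of ℕ → Bool is exactly 2^{n−1}; that is, g_n^{2^{n−1}} is the identity and g_n^j is not the identity for every j with 0 < j < 2^{n−1}. -/
/-!
Split off the first digit: `g_{n+1}` sends `0w` to `1w` and `1w` to `0 g_n(w)`, so it flips the
first digit, and its square sends `bw` to `b g_n(w)`. Hence the period of `bw` under `g_{n+1}` is
even, and twice the period of `w` under `g_n`; by induction every point has period exactly
`2^(n-1)` under `g_n`.
-/

open Function

theorem minimalPeriod_eq_of_semiconj_of_injective {α β : Type*} {f : α → α} {g : β → β}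
    {φ : α → β} (hφ : Injective φ) (h : Semiconj φ f g) (x : α) :
    minimalPeriod g (φ x) = minimalPeriod f x :=
  minimalPeriod_eq_minimalPeriod_iff.2 fun n => by
    rw [IsPeriodicPt, IsFixedPt, ← (h.iterate_right n).eq, hφ.eq_iff]
    rfl

theorem minimalPeriod_not (b : Bool) : minimalPeriod not b = 2 :=
  minimalPeriod_eq_prime (Bool.not_not b) (Bool.not_ne_self b)

theorem cat_nil (x : ℕ → Bool) : cat [] x = x := by
  funext i
  simp [cat]

theorem cat_cons (b : Bool) (u : List Bool) (x : ℕ → Bool) :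
    cat (b :: u) x = cat [b] (cat u x) := by
  funext i
  cases i <;> simp [cat]

theorem cat_singleton_zero (b : Bool) (x : ℕ → Bool) : cat [b] x 0 = b := rfl

theorem cat_singleton_comp_succ (b : Bool) (x : ℕ → Bool) : cat [b] x ∘ Nat.succ = x := by
  funext i
  simp [cat]

theorem cat_singleton_injective (b : Bool) : Injective (cat [b]) :=
  LeftInverse.injective (g := (· ∘ Nat.succ)) (cat_singleton_comp_succ b)

theorem exists_eq_cat_singleton (x : ℕ → Bool) : ∃ b w, x = cat [b] w := by
  refine ⟨x 0, x ∘ Nat.succ, funext fun i => ?_⟩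
  cases i <;> simp [cat]

theorem exists_eq_cat_replicate_true (m : ℕ) (x : ℕ → Bool) :
    (∃ k < m, ∃ w, x = cat (List.replicate k true ++ [false]) w) ∨
      ∃ w, x = cat (List.replicate m true) w := by
  induction m generalizing x with
  | zero => exact .inr ⟨x, (cat_nil x).symm⟩
  | succ m ih =>
    obtain ⟨_ | _, y, rfl⟩ := exists_eq_cat_singleton x
    · exact .inl ⟨0, m.succ_pos, y, rfl⟩
    · rcases ih y with ⟨k, hk, w, rfl⟩ | ⟨w, rfl⟩
      · exact .inl ⟨k + 1, Nat.succ_lt_succ hk, w, (cat_cons ..).symm⟩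
      · exact .inr ⟨w, (cat_cons ..).symm⟩

theorem GnRules.unique {n : ℕ} {f g : (ℕ → Bool) → ℕ → Bool} (hf : GnRules n f)
    (hg : GnRules n g) : f = g := by
  funext x
  rcases exists_eq_cat_replicate_true (n - 1) x with ⟨k, hk, w, rfl⟩ | ⟨w, rfl⟩
  · rw [hf.1 k hk, hg.1 k hk]
  · rw [hf.2, hg.2]

/-- The map flipping the first digit of a sequence and, when that digit was `1`, applying the carry
map `h` to the tail. In the notation of self-similar groups this is `(1, h)σ`. -/
def flipCarry (h : (ℕ → Bool) → ℕ → Bool) (x : ℕ → Bool) : ℕ → Bool :=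
  cat [!x 0] (if x 0 then h (x ∘ Nat.succ) else x ∘ Nat.succ)

section FlipCarry

variable (h : (ℕ → Bool) → ℕ → Bool)

theorem flipCarry_cat_false (w : ℕ → Bool) : flipCarry h (cat [false] w) = cat [true] w := by
  simp [flipCarry, cat_singleton_zero, cat_singleton_comp_succ]

theorem flipCarry_cat_true (w : ℕ → Bool) :
    flipCarry h (cat [true] w) = cat [false] (h w) := by
  simp [flipCarry, cat_singleton_zero, cat_singleton_comp_succ]

theorem semiconj_cat_singleton_flipCarry_iterate_two (b : Bool) :
    Semiconj (cat [b]) h (flipCarry h)^[2] := by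
  intro w
  cases b <;> simp [flipCarry_cat_false, flipCarry_cat_true]

theorem two_dvd_minimalPeriod_flipCarry (x : ℕ → Bool) : 2 ∣ minimalPeriod (flipCarry h) x := by
  have head_semiconj : Semiconj (fun y : ℕ → Bool => y 0) (flipCarry h) not := fun _ => rfl
  rw [← minimalPeriod_not (x 0)]
  exact ((isPeriodicPt_minimalPeriod (flipCarry h) x).map head_semiconj).minimalPeriod_dvd

theorem minimalPeriod_flipCarry_cat_singleton (b : Bool) (w : ℕ → Bool) :
    minimalPeriod (flipCarry h) (cat [b] w) = 2 * minimalPeriod h w := by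
  have even_period := two_dvd_minimalPeriod_flipCarry h (cat [b] w)
  have half_period : minimalPeriod h w = minimalPeriod (flipCarry h) (cat [b] w) / 2 := by
    rw [← minimalPeriod_eq_of_semiconj_of_injective (cat_singleton_injective b)
        (semiconj_cat_singleton_flipCarry_iterate_two h b),
      minimalPeriod_iterate_eq_div_gcd two_ne_zero, Nat.gcd_eq_right even_period]
  rw [half_period, Nat.mul_div_cancel' even_period]

end FlipCarry

/-- Addition of one with carry, modulo `2 ^ m`, on the first `m` digits of a sequence, least
significant digit first; this is the paper's `g_{m+1}`. -/
def odometer : ℕ → (ℕ → Bool) → ℕ → Bool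
  | 0 => id
  | m + 1 => flipCarry (odometer m)

theorem minimalPeriod_odometer (m : ℕ) (x : ℕ → Bool) : minimalPeriod (odometer m) x = 2 ^ m := by
  induction m generalizing x with
  | zero => exact minimalPeriod_id
  | succ m ih =>
    obtain ⟨b, w, rfl⟩ := exists_eq_cat_singleton x
    rw [odometer, minimalPeriod_flipCarry_cat_singleton, ih, pow_succ']

theorem odometer_cat_replicate_true_append_false {k m : ℕ} (hk : k < m) (w : ℕ → Bool) :
    odometer m (cat (List.replicate k true ++ [false]) w) =
      cat (List.replicate k false ++ [true]) w := by
  induction m generalizing k with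
  | zero => exact absurd hk k.not_lt_zero
  | succ m ih =>
    cases k with
    | zero => exact flipCarry_cat_false _ w
    | succ k =>
      simp only [List.replicate_succ, List.cons_append]
      rw [cat_cons, cat_cons false, odometer, flipCarry_cat_true, ih (Nat.lt_of_succ_lt_succ hk)]

theorem odometer_cat_replicate_true (m : ℕ) (w : ℕ → Bool) :
    odometer m (cat (List.replicate m true) w) = cat (List.replicate m false) w := by
  induction m with
  | zero => rfl
  | succ m ih =>
    simp only [List.replicate_succ]
    rw [cat_cons, cat_cons false, odometer, flipCarry_cat_true, ih]

theorem gnRules_odometer (n : ℕ) : GnRules n (odometer (n - 1)) :=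
  ⟨fun _ hk => odometer_cat_replicate_true_append_false hk, odometer_cat_replicate_true (n - 1)⟩

theorem GnRules.minimalPeriod_eq {n : ℕ} {g : (ℕ → Bool) → ℕ → Bool} (hg : GnRules n g)
    (x : ℕ → Bool) : minimalPeriod g x = 2 ^ (n - 1) := by
  rw [hg.unique (gnRules_odometer n), minimalPeriod_odometer]

/-- For every `n ≥ 1`, the order of `g_n` as a permutation of `ℕ → Bool` is exactly
`2^(n-1)`: the `2^(n-1)`-th iterate is the identity and no smaller positive iterate is. -/
theorem gn_order (n : ℕ) (hn : 1 ≤ n)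
    (g : (ℕ → Bool) → ℕ → Bool) (hg : GnRules n g) :
    g^[2 ^ (n - 1)] = id ∧ ∀ j, 0 < j → j < 2 ^ (n - 1) → g^[j] ≠ id := by
  refine ⟨funext fun x => ?_, fun j hj_pos hj_lt hj_id => ?_⟩
  · rw [← hg.minimalPeriod_eq x, iterate_minimalPeriod, id_eq]
  · let x : ℕ → Bool := fun _ => false
    rw [← hg.minimalPeriod_eq x] at hj_lt
    exact not_isPeriodicPt_of_pos_of_lt_minimalPeriod hj_pos.ne' hj_lt (congrFun hj_id x)
end
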